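/- Let C be a pivotal category. The morphisms ψ_X = (ev_r(X) ⊗ id_{X**})(id_X ⊗ coev_l(X*)) : X → X** form a pivotal structure on C: each ψ_X is an isomorphism, ψ is natural in X, ψ_𝟙 = id_𝟙 (under the identification 𝟙** = 𝟙 given by the duality morphisms of 𝟙), and ψ_{X⊗Y} = ψ_X ⊗ ψ_Y under the identification (X⊗Y)** = X** ⊗ Y** given by the (coinciding) monoidal constraints. -/

import Mathlib

open CategoryTheory CategoryTheory.Limits MonoidalCategory

universe v u w

/-- A pivotal category: a monoidal category in which every object is equipped with a dual
object and with evaluation/coevaluation morphisms forming a left duality and a right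
duality, such that left and right duals of morphisms coincide, the left and right
monoidal constraints coincide, and the left and right evaluations of the unit coincide. -/
class PivotalCat (C : Type u) [Category.{v} C] [MonoidalCategory C] where
  dual : C → C
  evl : ∀ X : C, dual X ⊗ X ⟶ 𝟙_ C
  coevl : ∀ X : C, 𝟙_ C ⟶ X ⊗ dual X
  evr : ∀ X : C, X ⊗ dual X ⟶ 𝟙_ C
  coevr : ∀ X : C, 𝟙_ C ⟶ dual X ⊗ X
  left_zigzag₁ : ∀ X : C,
    (λ_ X).inv ≫ (coevl X ▷ X) ≫ (α_ X (dual X) X).hom ≫ (X ◁ evl X) ≫ (ρ_ X).hom = 𝟙 X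
  left_zigzag₂ : ∀ X : C,
    (ρ_ (dual X)).inv ≫ (dual X ◁ coevl X) ≫ (α_ (dual X) X (dual X)).inv ≫
      (evl X ▷ dual X) ≫ (λ_ (dual X)).hom = 𝟙 (dual X)
  right_zigzag₁ : ∀ X : C,
    (ρ_ X).inv ≫ (X ◁ coevr X) ≫ (α_ X (dual X) X).inv ≫ (evr X ▷ X) ≫ (λ_ X).hom = 𝟙 X
  right_zigzag₂ : ∀ X : C,
    (λ_ (dual X)).inv ≫ (coevr X ▷ dual X) ≫ (α_ (dual X) X (dual X)).hom ≫
      (dual X ◁ evr X) ≫ (ρ_ (dual X)).hom = 𝟙 (dual X)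
  ldual_eq_rdual : ∀ {X Y : C} (f : X ⟶ Y),
    (ρ_ (dual Y)).inv ≫ (dual Y ◁ coevl X) ≫ (dual Y ◁ (f ▷ dual X)) ≫
      (α_ (dual Y) Y (dual X)).inv ≫ (evl Y ▷ dual X) ≫ (λ_ (dual X)).hom =
    (λ_ (dual Y)).inv ≫ (coevr X ▷ dual Y) ≫ ((dual X ◁ f) ▷ dual Y) ≫
      (α_ (dual X) Y (dual Y)).hom ≫ (dual X ◁ evr Y) ≫ (ρ_ (dual X)).hom
  constraint_eq : ∀ X Y : C,
    (ρ_ (dual X ⊗ dual Y)).inv ≫ ((dual X ⊗ dual Y) ◁ coevl (Y ⊗ X)) ≫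
      (α_ (dual X) (dual Y) ((Y ⊗ X) ⊗ dual (Y ⊗ X))).hom ≫
      (dual X ◁ (α_ (dual Y) (Y ⊗ X) (dual (Y ⊗ X))).inv) ≫
      (dual X ◁ (((α_ (dual Y) Y X).inv ≫ (evl Y ▷ X) ≫ (λ_ X).hom) ▷ dual (Y ⊗ X))) ≫
      (α_ (dual X) X (dual (Y ⊗ X))).inv ≫ (evl X ▷ dual (Y ⊗ X)) ≫ (λ_ (dual (Y ⊗ X))).hom =
    (λ_ (dual X ⊗ dual Y)).inv ≫ (coevr (Y ⊗ X) ▷ (dual X ⊗ dual Y)) ≫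
      (α_ (dual (Y ⊗ X)) (Y ⊗ X) (dual X ⊗ dual Y)).hom ≫
      (dual (Y ⊗ X) ◁ ((α_ Y X (dual X ⊗ dual Y)).hom ≫ (Y ◁ (α_ X (dual X) (dual Y)).inv) ≫
        (Y ◁ (evr X ▷ dual Y)) ≫ (Y ◁ (λ_ (dual Y)).hom) ≫ evr Y)) ≫
      (ρ_ (dual (Y ⊗ X))).hom
  ev_unit : (ρ_ (dual (𝟙_ C))).inv ≫ evl (𝟙_ C) = (λ_ (dual (𝟙_ C))).inv ≫ evr (𝟙_ C)

namespace PivotalCat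

variable {C : Type u} [Category.{v} C] [MonoidalCategory C] [PivotalCat C]

/-- The (common left = right) dual of a morphism. -/
def pdual {X Y : C} (f : X ⟶ Y) : dual Y ⟶ dual X :=
  (ρ_ (dual Y)).inv ≫ (dual Y ◁ coevl X) ≫ (dual Y ◁ (f ▷ dual X)) ≫
    (α_ (dual Y) Y (dual X)).inv ≫ (evl Y ▷ dual X) ≫ (λ_ (dual X)).hom

/-- The (common left = right) pivotal monoidal constraint `X* ⊗ Y* ⟶ (Y ⊗ X)*`. -/
def mcon (X Y : C) : dual X ⊗ dual Y ⟶ dual (Y ⊗ X) :=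
  (ρ_ (dual X ⊗ dual Y)).inv ≫ ((dual X ⊗ dual Y) ◁ coevl (Y ⊗ X)) ≫
    (α_ (dual X) (dual Y) ((Y ⊗ X) ⊗ dual (Y ⊗ X))).hom ≫
    (dual X ◁ (α_ (dual Y) (Y ⊗ X) (dual (Y ⊗ X))).inv) ≫
    (dual X ◁ (((α_ (dual Y) Y X).inv ≫ (evl Y ▷ X) ≫ (λ_ X).hom) ▷ dual (Y ⊗ X))) ≫
    (α_ (dual X) X (dual (Y ⊗ X))).inv ≫ (evl X ▷ dual (Y ⊗ X)) ≫ (λ_ (dual (Y ⊗ X))).hom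

/-- The left trace of an endomorphism. -/
def trl {X : C} (f : X ⟶ X) : 𝟙_ C ⟶ 𝟙_ C := coevr X ≫ (dual X ◁ f) ≫ evl X

/-- The right trace of an endomorphism. -/
def trr {X : C} (f : X ⟶ X) : 𝟙_ C ⟶ 𝟙_ C := coevl X ≫ (f ▷ dual X) ≫ evr X

/-- The left dimension of an object, as an endomorphism of the unit. -/
def diml (X : C) : 𝟙_ C ⟶ 𝟙_ C := trl (𝟙 X)

/-- The right dimension of an object, as an endomorphism of the unit. -/
def dimr (X : C) : 𝟙_ C ⟶ 𝟙_ C := trr (𝟙 X)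

/-- The permutation map `σ_{X,Y} : Hom(𝟙, X ⊗ Y) → Hom(𝟙, Y ⊗ X)`,
`α ↦ (ev_l X ⊗ id_{Y⊗X}) ∘ (id_{X*} ⊗ α ⊗ id_X) ∘ coev_r X`. -/
def sigmaMap (X Y : C) (a : 𝟙_ C ⟶ X ⊗ Y) : 𝟙_ C ⟶ Y ⊗ X :=
  coevr X ≫ (dual X ◁ (λ_ X).inv) ≫ (dual X ◁ (a ▷ X)) ≫ (dual X ◁ (α_ X Y X).hom) ≫
    (α_ (dual X) X (Y ⊗ X)).inv ≫ (evl X ▷ (Y ⊗ X)) ≫ (λ_ (Y ⊗ X)).hom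

end PivotalCat

/-- A pivotal category is spherical when left and right traces coincide. -/
class SphericalCat (C : Type u) [Category.{v} C] [MonoidalCategory C] [PivotalCat C] : Prop where
  tr_eq : ∀ {X : C} (f : X ⟶ X), PivotalCat.trl f = PivotalCat.trr f

namespace PivotalCat

variable {C : Type u} [Category.{v} C] [MonoidalCategory C] [PivotalCat C]

/-- The canonical morphism `ψ_X = (ev_r X ⊗ id_{X**}) ∘ (id_X ⊗ coev_l (X*)) : X ⟶ X**`. -/
def psi (X : C) : X ⟶ dual (dual X) :=
  (ρ_ X).inv ≫ (X ◁ coevl (dual X)) ≫ (α_ X (dual X) (dual (dual X))).inv ≫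
    (evr X ▷ dual (dual X)) ≫ (λ_ (dual (dual X))).hom

/-- The identification `𝟙 ≅ 𝟙**` given by the duality morphisms of the unit object. -/
def unitPsi : 𝟙_ C ⟶ dual (dual (𝟙_ C)) :=
  coevl (dual (𝟙_ C)) ≫ (((ρ_ (dual (𝟙_ C))).inv ≫ evl (𝟙_ C)) ▷ dual (dual (𝟙_ C))) ≫
    (λ_ (dual (dual (𝟙_ C)))).hom

end PivotalCat

namespace PivotalCat

section generic

variable {C : Type u} [Category.{v} C] [MonoidalCategory C]

/-- A morphism into `D` is recovered from its pairing with `X`. -/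
lemma recover {A D X : C} (ev : D ⊗ X ⟶ 𝟙_ C) (coev : 𝟙_ C ⟶ X ⊗ D)
    (z : (ρ_ D).inv ≫ (D ◁ coev) ≫ (α_ D X D).inv ≫ (ev ▷ D) ≫ (λ_ D).hom = 𝟙 D)
    (f : A ⟶ D) :
    f = (ρ_ A).inv ≫ (A ◁ coev) ≫ (α_ A X D).inv ≫ ((f ▷ X ≫ ev) ▷ D) ≫ (λ_ D).hom := by
  calc f = f ≫ 𝟙 D := by simp
    _ = (ρ_ A).inv ≫ (f ▷ 𝟙_ C ≫ D ◁ coev) ≫ (α_ D X D).inv ≫ (ev ▷ D) ≫ (λ_ D).hom := by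
      rw [← z]; simp
    _ = _ := by rw [← whisker_exchange]; simp

lemma pairing_cancel {A D X : C} (ev : D ⊗ X ⟶ 𝟙_ C) (coev : 𝟙_ C ⟶ X ⊗ D)
    (z : (ρ_ D).inv ≫ (D ◁ coev) ≫ (α_ D X D).inv ≫ (ev ▷ D) ≫ (λ_ D).hom = 𝟙 D)
    {f g : A ⟶ D} (h : f ▷ X ≫ ev = g ▷ X ≫ ev) : f = g := by
  rw [recover ev coev z f, recover ev coev z g, h]

lemma beta_left {A D X : C} (ev : D ⊗ X ⟶ 𝟙_ C) (coev : 𝟙_ C ⟶ X ⊗ D)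
    (z : (λ_ X).inv ≫ (coev ▷ X) ≫ (α_ X D X).hom ≫ (X ◁ ev) ≫ (ρ_ X).hom = 𝟙 X)
    (φ : A ⊗ X ⟶ 𝟙_ C) :
    ((ρ_ A).inv ≫ (A ◁ coev) ≫ (α_ A X D).inv ≫ (φ ▷ D) ≫ (λ_ D).hom) ▷ X ≫ ev = φ := by
  calc _ = 𝟙 _ ⊗≫ A ◁ (coev ▷ X) ⊗≫ (φ ▷ (D ⊗ X) ≫ 𝟙_ C ◁ ev) ⊗≫ 𝟙 _ := by monoidal
    _ = A ◁ ((λ_ X).inv ≫ (coev ▷ X) ≫ (α_ X D X).hom ≫ (X ◁ ev) ≫ (ρ_ X).hom) ≫ φ := by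
      rw [← whisker_exchange]; monoidal
    _ = φ := by rw [z]; simp

lemma beta_right {A D X : C} (ev : X ⊗ D ⟶ 𝟙_ C) (coev : 𝟙_ C ⟶ D ⊗ X)
    (z : (ρ_ X).inv ≫ (X ◁ coev) ≫ (α_ X D X).inv ≫ (ev ▷ X) ≫ (λ_ X).hom = 𝟙 X)
    (φ : X ⊗ A ⟶ 𝟙_ C) :
    X ◁ ((λ_ A).inv ≫ (coev ▷ A) ≫ (α_ D X A).hom ≫ (D ◁ φ) ≫ (ρ_ D).hom) ≫ ev = φ := by
  calc _ = 𝟙 _ ⊗≫ (X ◁ coev) ▷ A ⊗≫ ((X ⊗ D) ◁ φ ≫ ev ▷ 𝟙_ C) ⊗≫ 𝟙 _ := by monoidal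
    _ = ((ρ_ X).inv ≫ (X ◁ coev) ≫ (α_ X D X).inv ≫ (ev ▷ X) ≫ (λ_ X).hom) ▷ A ≫ φ := by
      rw [whisker_exchange]; monoidal
    _ = φ := by rw [z]; simp

end generic

variable {C : Type u} [Category.{v} C] [MonoidalCategory C] [PivotalCat C]

lemma evl_cancel {A X : C} {f g : A ⟶ dual X} (h : f ▷ X ≫ evl X = g ▷ X ≫ evl X) : f = g :=
  pairing_cancel _ _ (left_zigzag₂ X) h

lemma evr_cancel {A X : C} {f g : A ⟶ X} (h : f ▷ dual X ≫ evr X = g ▷ dual X ≫ evr X) :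
    f = g :=
  pairing_cancel _ _ (right_zigzag₁ X) h

lemma psi_evl (X : C) : psi X ▷ dual X ≫ evl (dual X) = evr X :=
  beta_left _ _ (left_zigzag₁ (dual X)) _

/-- The inverse of `psi X`. -/
def psiInv (X : C) : dual (dual X) ⟶ X :=
  (ρ_ _).inv ≫ (_ ◁ coevr X) ≫ (α_ _ _ _).inv ≫ (evl (dual X) ▷ X) ≫ (λ_ X).hom

lemma psiInv_evr (X : C) : psiInv X ▷ dual X ≫ evr X = evl (dual X) :=
  beta_left _ _ (right_zigzag₂ X) _

lemma psi_isIso (X : C) : IsIso (psi X) := by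
  refine ⟨psiInv X, evr_cancel ?_, evl_cancel ?_⟩
  · rw [comp_whiskerRight, Category.assoc, psiInv_evr, psi_evl]; simp
  · rw [comp_whiskerRight, Category.assoc, psi_evl, psiInv_evr]; simp

lemma pdual_evl {X Y : C} (f : X ⟶ Y) : pdual f ▷ X ≫ evl X = dual Y ◁ f ≫ evl Y := by
  rw [← beta_left _ _ (left_zigzag₁ X) (dual Y ◁ f ≫ evl Y)]
  simp [pdual]

lemma pdual_evr {X Y : C} (f : X ⟶ Y) : X ◁ pdual f ≫ evr X = f ▷ dual Y ≫ evr Y := by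
  rw [← beta_right _ _ (right_zigzag₁ X) (f ▷ dual Y ≫ evr Y), pdual, ldual_eq_rdual]
  simp

/-- The nested left evaluation. -/
def nestl (X Y : C) : (dual X ⊗ dual Y) ⊗ (Y ⊗ X) ⟶ 𝟙_ C :=
  (α_ _ _ _).hom ≫ dual X ◁ ((α_ (dual Y) Y X).inv ≫ (evl Y ▷ X) ≫ (λ_ X).hom) ≫ evl X

/-- The nested right evaluation. -/
def nestr (X Y : C) : (Y ⊗ X) ⊗ (dual X ⊗ dual Y) ⟶ 𝟙_ C :=
  (α_ Y X (dual X ⊗ dual Y)).hom ≫ (Y ◁ (α_ X (dual X) (dual Y)).inv) ≫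
        (Y ◁ (evr X ▷ dual Y)) ≫ (Y ◁ (λ_ (dual Y)).hom) ≫ evr Y

lemma mcon_evl (X Y : C) : mcon X Y ▷ (Y ⊗ X) ≫ evl (Y ⊗ X) = nestl X Y := by
  rw [← beta_left _ _ (left_zigzag₁ (Y ⊗ X)) (nestl X Y)]
  congr 2
  unfold mcon nestl
  monoidal

lemma mcon_evr (X Y : C) : (Y ⊗ X) ◁ mcon X Y ≫ evr (Y ⊗ X) = nestr X Y := by
  rw [← beta_right _ _ (right_zigzag₁ (Y ⊗ X)) (nestr X Y), mcon, constraint_eq]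
  rfl

lemma psi_nest (X Y : C) :
    (psi X ⊗ₘ psi Y) ▷ (dual Y ⊗ dual X) ≫ nestl (dual X) (dual Y) = nestr Y X := by
  unfold nestl nestr
  rw [← psi_evl X, ← psi_evl Y, MonoidalCategory.tensorHom_def]
  calc _ = 𝟙 _ ⊗≫ (psi X ▷ (Y ⊗ (dual Y ⊗ dual X)) ≫
          dual (dual X) ◁ (psi Y ▷ (dual Y ⊗ dual X) ⊗≫ evl (dual Y) ▷ dual X ⊗≫ 𝟙 (dual X))) ≫
          evl (dual X) := by monoidal
    _ = _ := by rw [← whisker_exchange]; monoidal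

end PivotalCat

open PivotalCat in
/-- In a pivotal category, the morphisms `ψ_X = (ev_r X ⊗ id_{X**}) ∘ (id_X ⊗ coev_l (X*))`
form a pivotal structure: each `ψ_X` is an isomorphism, `ψ` is natural, `ψ_𝟙 = id_𝟙`
(under the identification `𝟙** = 𝟙` given by the duality morphisms of `𝟙`), and
`ψ_{X⊗Y} = ψ_X ⊗ ψ_Y` (under the identification `(X⊗Y)** = X** ⊗ Y**` given by the
monoidal constraints). -/
theorem psi_is_pivotal_structure {C : Type u} [Category.{v} C] [MonoidalCategory C]
    [PivotalCat C] :
    (∀ X : C, IsIso (psi X)) ∧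
    (∀ {X Y : C} (f : X ⟶ Y), f ≫ psi Y = psi X ≫ pdual (pdual f)) ∧
    (psi (𝟙_ C) = unitPsi) ∧
    (∀ X Y : C, psi (X ⊗ Y) ≫ pdual (mcon Y X) =
      (psi X ⊗ₘ psi Y) ≫ mcon (dual X) (dual Y)) := by
  refine ⟨psi_isIso, ?_, ?_, ?_⟩
  · intro X Y f
    apply evl_cancel
    rw [comp_whiskerRight, comp_whiskerRight, Category.assoc, Category.assoc, psi_evl, pdual_evl,
      ← whisker_exchange_assoc, psi_evl, pdual_evr]
  · have h : evr (𝟙_ C) = (λ_ (dual (𝟙_ C))).hom ≫ (ρ_ (dual (𝟙_ C))).inv ≫ evl (𝟙_ C) := by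
      rw [ev_unit]; simp
    unfold psi unitPsi
    rw [h]
    monoidal
  · intro X Y
    apply evl_cancel
    rw [comp_whiskerRight, comp_whiskerRight, Category.assoc, Category.assoc, mcon_evl, pdual_evl,
      ← whisker_exchange_assoc, psi_evl, mcon_evr, psi_nest]
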